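/- If f, g ∈ ℂ[X₀, …, Xₙ] are homogeneous of degree d − n − 1 and both satisfy the vanishing conditions f ∈ I_v^{ord_P(L_v)} and g ∈ I_v^{ord_P(L_v)} for every nonzero v ∈ ℝ^{n+1}, then f and g are linearly dependent over ℂ: there exists a pair (a, b) ∈ ℂ² with (a, b) ≠ (0, 0) and a·f + b·g = 0. (Uniqueness part of the paper's main theorem on adjoints of arbitrary, possibly non-simple, polytopes.) -/

import Mathlib

open MvPolynomial Finset Classical

noncomputable section

/-- The homogenization embedding `y ↦ (1, y₁, …, yₙ)`. -/
def lift1 {n : ℕ} (y : Fin n → ℝ) : Fin (n + 1) → ℝ := Fin.cons 1 y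

/-- The polytope `P = {y ∈ ℝⁿ | ℓᵢ(1,y) ≥ 0 for all i}`. -/
def polytopeOf {n d : ℕ} (ℓ : Fin d → MvPolynomial (Fin (n + 1)) ℝ) : Set (Fin n → ℝ) :=
  {y | ∀ i, 0 ≤ eval (lift1 y) (ℓ i)}

/-- The facet `Fᵢ = {y ∈ P | ℓᵢ(1,y) = 0}`. -/
def facetOf {n d : ℕ} (ℓ : Fin d → MvPolynomial (Fin (n + 1)) ℝ) (i : Fin d) :
    Set (Fin n → ℝ) :=
  {y ∈ polytopeOf ℓ | eval (lift1 y) (ℓ i) = 0}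

/-- The flat `F_v = {i | ℓᵢ(v) = 0}` of all facet hyperplanes through `v`. -/
def flatOf {n d : ℕ} (ℓ : Fin d → MvPolynomial (Fin (n + 1)) ℝ) (v : Fin (n + 1) → ℝ) :
    Finset (Fin d) :=
  Finset.univ.filter fun i => eval v (ℓ i) = 0

/-- The rank `r_v`: the dimension of the linear span of `{ℓᵢ : i ∈ F_v}`. -/
def rkOf {n d : ℕ} (ℓ : Fin d → MvPolynomial (Fin (n + 1)) ℝ) (v : Fin (n + 1) → ℝ) : ℕ :=
  Module.finrank ℝ (Submodule.span ℝ (ℓ '' (flatOf ℓ v : Set (Fin d))))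

/-- The nullity `nl_v = |F_v| − r_v`. -/
def nlOf {n d : ℕ} (ℓ : Fin d → MvPolynomial (Fin (n + 1)) ℝ) (v : Fin (n + 1) → ℝ) : ℕ :=
  (flatOf ℓ v).card - rkOf ℓ v

/-- The set `P_v = {y ∈ P | ℓᵢ(1,y) = 0 for all i ∈ F_v}`. -/
def faceOf {n d : ℕ} (ℓ : Fin d → MvPolynomial (Fin (n + 1)) ℝ) (v : Fin (n + 1) → ℝ) :
    Set (Fin n → ℝ) :=
  {y ∈ polytopeOf ℓ | ∀ i ∈ flatOf ℓ v, eval (lift1 y) (ℓ i) = 0}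

/-- The order `ord_P(L_v)`: equal to `nl_v` if `P_v` is nonempty with affine span of
dimension `n − r_v`, and to `nl_v + 1` otherwise. -/
def ordOf {n d : ℕ} (ℓ : Fin d → MvPolynomial (Fin (n + 1)) ℝ) (v : Fin (n + 1) → ℝ) : ℕ :=
  if (faceOf ℓ v).Nonempty ∧
      Module.finrank ℝ (affineSpan ℝ (faceOf ℓ v)).direction = n - rkOf ℓ v
  then nlOf ℓ v
  else nlOf ℓ v + 1

/-- The ideal `I_v ⊆ ℂ[X₀,…,Xₙ]` generated by all homogeneous degree-1 polynomials
vanishing at the real point `v`. -/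
def pointIdealC {n : ℕ} (v : Fin (n + 1) → ℝ) : Ideal (MvPolynomial (Fin (n + 1)) ℂ) :=
  Ideal.span {p | p.IsHomogeneous 1 ∧ eval (fun i => (v i : ℂ)) p = 0}

/-- The ideal `I_v ⊆ ℝ[X₀,…,Xₙ]` generated by all homogeneous degree-1 polynomials
vanishing at `v`. -/
def pointIdealR {n : ℕ} (v : Fin (n + 1) → ℝ) : Ideal (MvPolynomial (Fin (n + 1)) ℝ) :=
  Ideal.span {p | p.IsHomogeneous 1 ∧ eval v p = 0}

/-- Complexification of a real polynomial. -/
def toC {n : ℕ} (p : MvPolynomial (Fin (n + 1)) ℝ) : MvPolynomial (Fin (n + 1)) ℂ :=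
  map (algebraMap ℝ ℂ) p

/-- The hypotheses on the facet equations `ℓ₁, …, ℓ_d` of a full-dimensional compact convex
polytope `P ⊆ ℝⁿ`: the `ℓᵢ` are pairwise non-proportional homogeneous degree-1 polynomials,
`P` is compact with affine span all of `ℝⁿ`, and each facet `Fᵢ` is nonempty with affine
span of dimension `n − 1`. -/
structure IsPolytopeSetup {n d : ℕ} (ℓ : Fin d → MvPolynomial (Fin (n + 1)) ℝ) : Prop where
  hn : 1 ≤ n
  hd : n + 1 ≤ d
  hhom : ∀ i, (ℓ i).IsHomogeneous 1
  hne : ∀ i, ℓ i ≠ 0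
  hprop : ∀ i j, i ≠ j → ∀ c : ℝ, c • ℓ i ≠ ℓ j
  hcpt : IsCompact (polytopeOf ℓ)
  hfull : affineSpan ℝ (polytopeOf ℓ) = ⊤
  hfacet_ne : ∀ i, (facetOf ℓ i).Nonempty
  hfacet : ∀ i, Module.finrank ℝ (affineSpan ℝ (facetOf ℓ i)).direction = n - 1

/-!
Pass to the cone over the polytope and induct on its dimension. An adjoint restricted to the
hyperplane of a facet vanishes where that hyperplane meets a facet hyperplane not adjacent to it, so
the equations of the nonadjacent facets divide out, and by counting degrees and nullities the
quotient is an adjoint of the facet. Hence it suffices that an adjoint vanishing on one facet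
hyperplane is zero. By the same restriction, and induction on the dimension, it then vanishes on the
hyperplanes of all adjacent facets, so on all facet hyperplanes, because the facets are connected
through ridges; being divisible by the product of all facet equations, whose degree exceeds its own,
it is zero.
-/

section PolynomialFunctions

variable {K A V W : Type*} [Field K] [CommRing A] [Algebra K A]
  [AddCommGroup V] [Module K V] [AddCommGroup W] [Module K W]

variable (K) in
/-- The `A`-valued polynomial functions of degree `< m` on the `K`-vector space `V`, generated by
constants, sums and products with linear forms. Bounding the degree strictly makes `m = 0` the zero
function. -/
inductive IsPolyFun : ℕ → (V → A) → Prop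
  | zero (m : ℕ) : IsPolyFun m fun _ => 0
  | const (m : ℕ) (a : A) : IsPolyFun (m + 1) fun _ => a
  | add {m : ℕ} {f g : V → A} : IsPolyFun m f → IsPolyFun m g → IsPolyFun m fun x => f x + g x
  | smul {m : ℕ} {f : V → A} (l : Module.Dual K V) :
      IsPolyFun m f → IsPolyFun (m + 1) fun x => l x • f x

namespace IsPolyFun

variable {ι : Type*} {m m' : ℕ} {f g : V → A}

theorem apply_eq_zero (hf : IsPolyFun K 0 f) (x : V) : f x = 0 := by
  generalize hm : 0 = m at hf
  induction hf with
  | zero => rfl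
  | const => omega
  | add _ _ hf hg => exact (congrArg₂ _ (hf hm) (hg hm)).trans (add_zero 0)
  | smul => omega

theorem comp_linearMap (hf : IsPolyFun K m f) (φ : W →ₗ[K] V) :
    IsPolyFun K m fun x => f (φ x) := by
  induction hf with
  | zero m => exact zero m
  | const m a => exact const m a
  | add _ _ hf hg => exact hf.add hg
  | smul l _ hf => exact hf.smul (l.comp φ)

theorem const_mul (hf : IsPolyFun K m f) (a : A) : IsPolyFun K m fun x => a * f x := by
  induction hf with
  | zero m => simpa only [mul_zero] using zero m
  | const m b => exact const m (a * b)
  | add _ _ hf hg => simpa only [mul_add] using hf.add hg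
  | smul l _ hf => simpa only [mul_smul_comm] using hf.smul l

theorem mono (hf : IsPolyFun K m f) (hm : m ≤ m') : IsPolyFun K m' f := by
  induction hf generalizing m' with
  | zero => exact zero m'
  | const m a =>
    obtain ⟨k, rfl⟩ := Nat.exists_eq_add_of_le' (Nat.one_le_of_lt hm)
    exact const k a
  | add _ _ hf hg => exact (hf hm).add (hg hm)
  | smul l _ hf =>
    obtain ⟨k, rfl⟩ := Nat.exists_eq_add_of_le' (Nat.one_le_of_lt hm)
    exact (hf (Nat.le_of_succ_le_succ hm)).smul l

theorem sum {s : Finset ι} {f : ι → V → A} (hf : ∀ i ∈ s, IsPolyFun K m (f i)) :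
    IsPolyFun K m fun x => ∑ i ∈ s, f i x := by
  induction s using Finset.induction_on with
  | empty => simpa only [sum_empty] using zero m
  | insert i s hi ih =>
    simp only [sum_insert hi]
    exact (hf i (mem_insert_self i s)).add (ih fun j hj => hf j (mem_insert_of_mem hj))

theorem pow_smul (hf : IsPolyFun K m f) (l : Module.Dual K V) (e : ℕ) :
    IsPolyFun K (m + e) fun x => l x ^ e • f x := by
  induction e with
  | zero => simpa only [pow_zero, one_smul, add_zero] using hf
  | succ e ih => simpa only [pow_succ', mul_smul, ← add_assoc] using ih.smul l

theorem prod_pow_smul (hf : IsPolyFun K m f) (l : ι → Module.Dual K V) (e : ι → ℕ)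
    (s : Finset ι) :
    IsPolyFun K (m + ∑ i ∈ s, e i) fun x => (∏ i ∈ s, l i x ^ e i) • f x := by
  induction s using Finset.induction_on with
  | empty => simpa only [sum_empty, prod_empty, one_smul, add_zero] using hf
  | insert i s hi ih =>
    simp only [sum_insert hi, prod_insert hi, mul_smul]
    exact (ih.pow_smul (l i) (e i)).mono (by omega)

theorem prod_smul (hf : IsPolyFun K m f) (l : ι → Module.Dual K V) (s : Finset ι) :
    IsPolyFun K (m + #s) fun x => (∏ i ∈ s, l i x) • f x := by
  simpa only [pow_one, sum_const, smul_eq_mul, mul_one] using hf.prod_pow_smul l (fun _ => 1) s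

theorem exists_sub_eq_smul (hf : IsPolyFun K m f) (l : Module.Dual K V) (u : V) :
    ∃ g, IsPolyFun K (m - 1) g ∧ ∀ x, f x - f (x - l x • u) = l x • g x := by
  induction hf with
  | zero m => exact ⟨_, zero _, by simp⟩
  | const m a => exact ⟨_, zero _, by simp⟩
  | add _ _ hf hg =>
    obtain ⟨f', hf', hff'⟩ := hf
    obtain ⟨g', hg', hgg'⟩ := hg
    refine ⟨_, hf'.add hg', fun x => ?_⟩
    rw [smul_add, ← hff', ← hgg']
    exact add_sub_add_comm _ _ _ _
  | @smul m f k hf ih =>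
    obtain ⟨f', hf', hff'⟩ := ih
    rcases Nat.eq_zero_or_pos m with rfl | hm
    · exact ⟨_, zero _, fun x => by simp [hf.apply_eq_zero]⟩
    · have hkf' : IsPolyFun K m fun x => k x • f' x := by
        simpa only [Nat.sub_add_cancel hm] using hf'.smul k
      have hproj := (hf.comp_linearMap (LinearMap.id - l.smulRight u)).const_mul
        (algebraMap K A (k u))
      refine ⟨_, hkf'.add hproj, fun x => ?_⟩
      -- the Leibniz rule for the difference operator `f ↦ f x - f (x - l x • u)`
      calc k x • f x - k (x - l x • u) • f (x - l x • u)
          = k x • (f x - f (x - l x • u)) + (l x * k u) • f (x - l x • u) := by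
            rw [map_sub, map_smul, smul_eq_mul]
            module
        _ = l x • (k x • f' x + algebraMap K A (k u) * f (x - l x • u)) := by
            rw [hff', ← Algebra.smul_def]
            module

theorem exists_eq_smul (hf : IsPolyFun K m f) {l : Module.Dual K V} (hl : l ≠ 0)
    (hf0 : ∀ x, l x = 0 → f x = 0) : ∃ g, IsPolyFun K (m - 1) g ∧ ∀ x, f x = l x • g x := by
  obtain ⟨w, hw⟩ := DFunLike.ne_iff.mp hl
  obtain ⟨g, hg, hfg⟩ := hf.exists_sub_eq_smul l ((l w)⁻¹ • w)
  refine ⟨g, hg, fun x => ?_⟩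
  have hproj : l (x - l x • (l w)⁻¹ • w) = 0 := by simp [inv_mul_cancel₀ hw]
  rw [← hfg, hf0 _ hproj, sub_zero]

end IsPolyFun

variable (K) in
/-- The function on `σ → K` defined by a polynomial with coefficients in the `K`-algebra `A`. -/
def evalScalars {σ : Type*} (f : MvPolynomial σ A) (x : σ → K) : A :=
  eval (fun i => algebraMap K A (x i)) f

theorem isPolyFun_evalScalars {σ : Type*} {f : MvPolynomial σ A} {m : ℕ}
    (hf : f.totalDegree ≤ m) : IsPolyFun K (m + 1) (evalScalars K f) := by
  have hsum : evalScalars K f = fun x => ∑ s ∈ f.support,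
      (∏ i ∈ s.support, (LinearMap.proj i : Module.Dual K (σ → K)) x ^ s i) • f.coeff s := by
    funext x
    rw [evalScalars, eval_eq]
    simp [Algebra.smul_def, mul_comm]
  rw [hsum]
  refine IsPolyFun.sum fun s hs => ?_
  have hdeg : ∑ i ∈ s.support, s i ≤ m := (le_totalDegree hs).trans hf
  exact ((IsPolyFun.const 0 (f.coeff s)).prod_pow_smul _ s s.support).mono (by omega)

end PolynomialFunctions

section VanishingOrder

open Filter

open Polynomial (evalRingHom)

open scoped Polynomial

variable {K A V W : Type*} [Field K] [CommRing A] [Algebra K A]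
  [AddCommGroup V] [Module K V] [AddCommGroup W] [Module K W]

theorem eventually_cofinite_apply_add_smul_ne_zero {l : Module.Dual K V} {v z : V}
    (h : l v ≠ 0 ∨ l z ≠ 0) : ∀ᶠ e : K in cofinite, l (v + e • z) ≠ 0 := by
  simp only [map_add, map_smul, smul_eq_mul]
  by_cases hz : l z = 0
  · exact .of_forall fun e => by simpa [hz] using h
  · refine eventually_cofinite.mpr ((Set.finite_singleton (-l v / l z)).subset fun e he => ?_)
    rw [Set.mem_singleton_iff, eq_div_iff hz]
    exact eq_neg_of_add_eq_zero_right (not_not.mp he)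

theorem polynomial_eq_zero_of_frequently_eval_eq_zero [IsDomain A] {p : A[X]}
    (hp : ∃ᶠ e : K in cofinite, p.eval (algebraMap K A e) = 0) : p = 0 := by
  refine p.eq_zero_of_infinite_isRoot ?_
  exact ((frequently_cofinite_iff_infinite.mp hp).image
    (algebraMap K A).injective.injOn).mono (Set.image_subset_iff.mpr fun _ he => he)

variable (K) in
/-- The function `f` vanishes at `v` to order at least `k` in the direction `u`. -/
def VanishesAlong (f : V → A) (v u : V) (k : ℕ) : Prop :=
  ∃ p : A[X], Polynomial.X ^ k ∣ p ∧ ∀ t : K, f (v + t • u) = p.eval (algebraMap K A t)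

variable (K) in
/-- The function `f` vanishes at `v` to order at least `k`, tested on the lines through `v`. -/
def VanishesToOrder (f : V → A) (v : V) (k : ℕ) : Prop :=
  ∀ u, VanishesAlong K f v u k

variable {f g : V → A} {v u : V} {k k' m : ℕ}

theorem VanishesAlong.X_pow_dvd [IsDomain A] [Infinite K] (hf : VanishesAlong K f v u k)
    {p : A[X]} (hp : ∀ t : K, f (v + t • u) = p.eval (algebraMap K A t)) :
    Polynomial.X ^ k ∣ p := by
  obtain ⟨q, hkq, hq⟩ := hf
  suffices p - q = 0 from sub_eq_zero.mp this ▸ hkq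
  refine polynomial_eq_zero_of_frequently_eval_eq_zero (K := K) (Frequently.of_forall fun t => ?_)
  rw [Polynomial.eval_sub, ← hp, ← hq, sub_self]

theorem VanishesAlong.X_pow_dvd_linear_mul [IsDomain A] [Infinite K] {l : Module.Dual K V}
    (hlg : VanishesAlong K (fun x => l x • g x) v u k) {p : A[X]}
    (hp : ∀ t : K, g (v + t • u) = p.eval (algebraMap K A t)) :
    Polynomial.X ^ k ∣ (Polynomial.C (algebraMap K A (l v))
      + Polynomial.C (algebraMap K A (l u)) * Polynomial.X) * p :=
  hlg.X_pow_dvd fun t => by simp [hp, Algebra.smul_def, mul_comm (algebraMap K A t)]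

namespace VanishesToOrder

theorem mono (hf : VanishesToOrder K f v k) (hk : k' ≤ k) : VanishesToOrder K f v k' := fun u =>
  let ⟨p, hkp, hp⟩ := hf u
  ⟨p, (pow_dvd_pow _ hk).trans hkp, hp⟩

theorem apply_eq_zero (hf : VanishesToOrder K f v k) (hk : k ≠ 0) : f v = 0 := by
  obtain ⟨p, hkp, hp⟩ := hf 0
  have hp0 : p.eval 0 = 0 :=
    Polynomial.dvd_iff_isRoot.mp (by simpa using (dvd_pow_self _ hk).trans hkp)
  simpa [hp0] using hp 0

theorem const_mul_add_const_mul (hf : VanishesToOrder K f v k) (hg : VanishesToOrder K g v k)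
    (a b : A) : VanishesToOrder K (fun x => a * f x + b * g x) v k := fun u => by
  obtain ⟨p, hkp, hp⟩ := hf u
  obtain ⟨q, hkq, hq⟩ := hg u
  exact ⟨Polynomial.C a * p + Polynomial.C b * q, dvd_add (hkp.mul_left _) (hkq.mul_left _),
    fun t => by simp [hp, hq]⟩

theorem comp_linearMap (φ : W →ₗ[K] V) {w : W} (hf : VanishesToOrder K f (φ w) k) :
    VanishesToOrder K (fun x => f (φ x)) w k := fun u => by
  obtain ⟨p, hkp, hp⟩ := hf (φ u)
  exact ⟨p, hkp, fun t => by simp [← hp]⟩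

end VanishesToOrder

namespace IsPolyFun

theorem exists_evalEval_eq (hf : IsPolyFun K m f) (v z u y : V) :
    ∃ Q : A[X][X], ∀ e t : K,
      f ((v + e • z) + t • (u + e • y)) = Q.evalEval (algebraMap K A e) (algebraMap K A t) := by
  induction hf with
  | zero => exact ⟨0, by simp⟩
  | const _ a => exact ⟨Polynomial.C (Polynomial.C a), by simp⟩
  | add _ _ hf hg =>
    obtain ⟨P, hP⟩ := hf
    obtain ⟨Q, hQ⟩ := hg
    exact ⟨P + Q, fun e t => by simp only [hP, hQ, Polynomial.evalEval_add]⟩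
  | smul l _ hf =>
    obtain ⟨Q, hQ⟩ := hf
    let c (x : V) : A[X] := Polynomial.C (algebraMap K A (l x))
    refine ⟨(Polynomial.C (c v + Polynomial.X * c z)
      + Polynomial.X * Polynomial.C (c u + Polynomial.X * c y)) * Q, fun e t => ?_⟩
    simp only [hQ, Algebra.smul_def]
    simp only [map_add, map_smul, smul_eq_mul, map_mul, Polynomial.evalEval, Polynomial.eval_mul,
      Polynomial.eval_add, Polynomial.eval_C, Polynomial.eval_X, c]

theorem exists_eval_eq (hf : IsPolyFun K m f) (v u : V) :
    ∃ p : A[X], ∀ t : K, f (v + t • u) = p.eval (algebraMap K A t) := by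
  obtain ⟨Q, hQ⟩ := hf.exists_evalEval_eq v 0 u 0
  exact ⟨Q.map (evalRingHom (algebraMap K A 0)), fun t => by
    rw [Polynomial.map_evalRingHom_eval, ← hQ]; simp⟩

variable [IsDomain A]

theorem apply_eq_zero_of_frequently {z : V} (hf : IsPolyFun K m f)
    (h : ∃ᶠ e : K in cofinite, f (v + e • z) = 0) : f v = 0 := by
  obtain ⟨p, hp⟩ := hf.exists_eval_eq v z
  have hp0 : p = 0 := polynomial_eq_zero_of_frequently_eval_eq_zero (h.mono fun e he => hp e ▸ he)
  simpa [hp0] using hp 0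

variable [Infinite K]

theorem vanishesAlong_of_frequently {z y : V} (hf : IsPolyFun K m f)
    (h : ∃ᶠ e : K in cofinite, VanishesAlong K f (v + e • z) (u + e • y) k) :
    VanishesAlong K f v u k := by
  obtain ⟨Q, hQ⟩ := hf.exists_evalEval_eq v z u y
  have hkQ : Polynomial.X ^ k ∣ Q := Polynomial.X_pow_dvd_iff.mpr fun j hj => by
    refine polynomial_eq_zero_of_frequently_eval_eq_zero (h.mono fun e he => ?_)
    have hdvd := he.X_pow_dvd (p := Q.map (evalRingHom (algebraMap K A e))) fun t => by
      rw [hQ, Polynomial.map_evalRingHom_eval]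
    simpa using Polynomial.X_pow_dvd_iff.mp hdvd j hj
  refine ⟨Q.map (evalRingHom (algebraMap K A 0)), ?_, fun t => ?_⟩
  · simpa using Polynomial.map_dvd (evalRingHom (algebraMap K A 0)) hkQ
  · rw [Polynomial.map_evalRingHom_eval, ← hQ]
    simp

theorem vanishesToOrder_of_frequently {z : V} (hf : IsPolyFun K m f)
    (h : ∃ᶠ e : K in cofinite, VanishesToOrder K f (v + e • z) k) : VanishesToOrder K f v k :=
  fun u => hf.vanishesAlong_of_frequently (y := 0) (h.mono fun e he => by simpa using he u)

section Division

variable {l : Module.Dual K V} {ι : Type*} {s : Finset ι}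

theorem vanishesAlong_of_smul_of_apply_ne_zero (hg : IsPolyFun K m g) (hv : l v ≠ 0)
    (hlg : VanishesAlong K (fun x => l x • g x) v u k) : VanishesAlong K g v u k := by
  obtain ⟨p, hp⟩ := hg.exists_eval_eq v u
  refine ⟨p, Polynomial.prime_X.pow_dvd_of_dvd_mul_left k ?_ (hlg.X_pow_dvd_linear_mul hp), hp⟩
  simpa [Polynomial.X_dvd_iff] using hv

theorem vanishesAlong_of_smul_of_apply_eq_zero (hg : IsPolyFun K m g) (hv : l v = 0)
    (hu : l u ≠ 0) (hlg : VanishesAlong K (fun x => l x • g x) v u (k + 1)) :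
    VanishesAlong K g v u k := by
  obtain ⟨p, hp⟩ := hg.exists_eval_eq v u
  have hdvd := hlg.X_pow_dvd_linear_mul hp
  rw [hv, map_zero, map_zero, zero_add, pow_succ', mul_right_comm, mul_comm _ Polynomial.X,
    mul_dvd_mul_iff_left Polynomial.X_ne_zero] at hdvd
  have hunit : IsUnit (Polynomial.C (algebraMap K A (l u))) :=
    Polynomial.isUnit_C.mpr (hu.isUnit.map _)
  exact ⟨p, hunit.dvd_mul_left.mp hdvd, hp⟩

theorem vanishesToOrder_of_smul (hg : IsPolyFun K m g) (hl : l ≠ 0)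
    (hlg : VanishesToOrder K (fun x => l x • g x) v k) :
    VanishesToOrder K g v (k - if l v = 0 then 1 else 0) := fun u => by
  split_ifs with hv
  · rcases k with _ | k
    · obtain ⟨p, hp⟩ := hg.exists_eval_eq v u
      exact ⟨p, by simp, hp⟩
    · obtain ⟨w, hw⟩ := DFunLike.ne_iff.mp hl
      refine hg.vanishesAlong_of_frequently (z := 0) (y := w) ?_
      have hne : ∀ᶠ e : K in cofinite, l (u + e • w) ≠ 0 :=
        eventually_cofinite_apply_add_smul_ne_zero (.inr hw)
      refine hne.frequently.mono fun e he => ?_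
      simpa using hg.vanishesAlong_of_smul_of_apply_eq_zero hv he (hlg _)
  · exact hg.vanishesAlong_of_smul_of_apply_ne_zero hv (hlg u)

theorem vanishesToOrder_of_prod_smul {l : ι → Module.Dual K V} (hg : IsPolyFun K m g)
    (hl : ∀ i ∈ s, l i ≠ 0) (hlg : VanishesToOrder K (fun x => (∏ i ∈ s, l i x) • g x) v k) :
    VanishesToOrder K g v (k - #{i ∈ s | l i v = 0}) := by
  induction s using Finset.induction_on generalizing k with
  | empty => simpa using hlg
  | insert i s hi ih =>
    simp only [prod_insert hi, mul_smul] at hlg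
    have hs := ih (fun j hj => hl j (mem_insert_of_mem hj))
      ((hg.prod_smul l s).vanishesToOrder_of_smul (hl i (mem_insert_self i s)) hlg)
    refine hs.mono ?_
    rw [filter_insert]
    split_ifs
    · rw [card_insert_of_notMem (by simp [hi])]
      omega
    · omega

theorem eq_zero_of_smul_eq_zero {L : Submodule K V} (hg : IsPolyFun K m g)
    (hl : ∃ z ∈ L, l z ≠ 0) (h0 : ∀ x ∈ L, l x • g x = 0) : ∀ x ∈ L, g x = 0 := by
  obtain ⟨z, hz, hlz⟩ := hl
  refine fun x hx => hg.apply_eq_zero_of_frequently (z := z) ?_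
  have hne : ∀ᶠ e : K in cofinite, l (x + e • z) ≠ 0 :=
    eventually_cofinite_apply_add_smul_ne_zero (.inr hlz)
  refine hne.frequently.mono fun e he => ?_
  have h := h0 _ (L.add_mem hx (L.smul_mem e hz))
  rw [Algebra.smul_def] at h
  exact (mul_eq_zero.mp h).resolve_left ((map_ne_zero _).mpr he)

theorem eq_zero_of_prod_smul_eq_zero {L : Submodule K V} {l : ι → Module.Dual K V}
    (hg : IsPolyFun K m g) (hl : ∀ i ∈ s, ∃ z ∈ L, l i z ≠ 0)
    (h0 : ∀ x ∈ L, (∏ i ∈ s, l i x) • g x = 0) : ∀ x ∈ L, g x = 0 := by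
  induction s using Finset.induction_on with
  | empty => simpa using h0
  | insert i s hi ih =>
    refine ih (fun j hj => hl j (mem_insert_of_mem hj)) ?_
    refine (hg.prod_smul l s).eq_zero_of_smul_eq_zero (hl i (mem_insert_self i s)) fun x hx => ?_
    rw [smul_smul, ← prod_insert (f := fun i => l i x) hi, h0 x hx]

theorem exists_eq_prod_smul {l : ι → Module.Dual K V} (hf : IsPolyFun K m f)
    (hl0 : ∀ i ∈ s, l i ≠ 0) (hl : ∀ i ∈ s, ∀ j ∈ s, i ≠ j → ∃ z, l i z = 0 ∧ l j z ≠ 0)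
    (hf0 : ∀ i ∈ s, ∀ x, l i x = 0 → f x = 0) :
    ∃ g, IsPolyFun K (m - #s) g ∧ ∀ x, f x = (∏ i ∈ s, l i x) • g x := by
  induction s using Finset.induction_on with
  | empty => exact ⟨f, by simpa using hf, by simp⟩
  | insert i s hi ih =>
    have his := mem_insert_self i s
    have hs {j} (hj : j ∈ s) : j ∈ insert i s := mem_insert_of_mem hj
    obtain ⟨g, hg, hfg⟩ := ih (fun j hj => hl0 j (hs hj))
      (fun j hj k hk => hl j (hs hj) k (hs hk)) (fun j hj => hf0 j (hs hj))
    have hg0 : ∀ x ∈ LinearMap.ker (l i), g x = 0 :=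
      hg.eq_zero_of_prod_smul_eq_zero (fun j hj => hl i his j (hs hj) (by rintro rfl; exact hi hj))
        fun x hx => by rw [← hfg, hf0 i his x hx]
    obtain ⟨g', hg', hgg'⟩ := hg.exists_eq_smul (hl0 i his) hg0
    refine ⟨g', by rwa [card_insert_of_notMem hi, ← Nat.sub_sub], fun x => ?_⟩
    rw [hfg, hgg', prod_insert hi, smul_smul, mul_comm]

end Division

end IsPolyFun

end VanishingOrder

section CommonKernel

variable {K V ι : Type*} [Field K] [AddCommGroup V] [Module K V]

/-- The common zero space of the forms `l i` with `i ∈ s`; for a flat `s` of the arrangement this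
is the linear space called `L` in the definition of the order of vanishing. -/
def commonKer (l : ι → Module.Dual K V) (s : Finset ι) : Submodule K V :=
  ⨅ i ∈ s, LinearMap.ker (l i)

variable {l : ι → Module.Dual K V}

theorem mem_commonKer {s : Finset ι} {x : V} : x ∈ commonKer l s ↔ ∀ i ∈ s, l i x = 0 := by
  simp [commonKer]

theorem mem_commonKer_pair {i j : ι} {x : V} :
    x ∈ commonKer l {i, j} ↔ l i x = 0 ∧ l j x = 0 := by
  simp [mem_commonKer]

end CommonKernel

section Cones

open Filter

variable {K V ι : Type*} [Field K] [LinearOrder K] [AddCommGroup V] [Module K V]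

/-- The set `s` consists of exactly those facet equations that vanish on some face of the cone
`{x | ∀ i, 0 ≤ l i x}`. -/
def IsFace (l : ι → Module.Dual K V) (s : Finset ι) : Prop :=
  ∃ x ∈ commonKer l s, ∀ i ∉ s, 0 < l i x

/-- The forms `l i` are the facet equations of a pointed full-dimensional polyhedral cone, without
repetition or redundancy. -/
structure IsFacetSystem (l : ι → Module.Dual K V) : Prop where
  eq_zero_of_forall_eq_zero : ∀ x, (∀ i, l i x = 0) → x = 0
  isFace_empty : IsFace l ∅
  isFace_singleton : ∀ i, IsFace l {i}

/-- The facets `i` and `j` share a ridge, that is, a face of codimension two. -/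
def FacetAdj (l : ι → Module.Dual K V) (i j : ι) : Prop :=
  i ≠ j ∧ IsFace l {i, j}

/-- The equations of the adjacent facets, restricted to the hyperplane of the facet `i`. -/
def facetForms (l : ι → Module.Dual K V) (i : ι) :
    {j // FacetAdj l i j} → Module.Dual K (LinearMap.ker (l i)) :=
  fun j => (l j).domRestrict (LinearMap.ker (l i))

variable {l : ι → Module.Dual K V} {s : Finset ι} {i j k : ι}

theorem FacetAdj.symm (h : FacetAdj l i j) : FacetAdj l j i :=
  ⟨h.1.symm, Finset.pair_comm i j ▸ h.2⟩

theorem IsFace.isFace_facetForms (hs : IsFace l s) (hi : i ∈ s) :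
    IsFace (facetForms l i) (s.subtype (FacetAdj l i)) := by
  obtain ⟨x, hx, hpos⟩ := hs
  rw [mem_commonKer] at hx
  exact ⟨⟨x, hx i hi⟩, mem_commonKer.mpr fun j hj => hx j (mem_subtype.mp hj),
    fun j hj => hpos j (mt mem_subtype.mpr hj)⟩

namespace IsFacetSystem

theorem nonempty (h : IsFacetSystem l) (hV : Module.finrank K V ≠ 0) :
    Nonempty ι := by
  by_contra hι
  rw [not_nonempty_iff] at hι
  have : Subsingleton V := ⟨fun x y => (h.eq_zero_of_forall_eq_zero x hι.elim).trans
    (h.eq_zero_of_forall_eq_zero y hι.elim).symm⟩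
  exact hV Module.finrank_zero_of_subsingleton

theorem ne_zero (h : IsFacetSystem l) (i : ι) : l i ≠ 0 := by
  obtain ⟨x, -, hpos⟩ := h.isFace_empty
  intro h0
  simpa [h0] using hpos i (notMem_empty i)

theorem finiteDimensional [Finite ι] (h : IsFacetSystem l) : FiniteDimensional K V :=
  Module.Finite.of_injective (LinearMap.pi l) <| LinearMap.ker_eq_bot.mp <|
    (Submodule.eq_bot_iff _).mpr fun x hx => h.eq_zero_of_forall_eq_zero x (congrFun hx)

theorem finrank_ker_add_one [Finite ι] (h : IsFacetSystem l) (i : ι) :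
    Module.finrank K (LinearMap.ker (l i)) + 1 = Module.finrank K V :=
  have := h.finiteDimensional
  Module.Dual.finrank_ker_add_one_of_ne_zero (h.ne_zero i)

theorem exists_facet_point (h : IsFacetSystem l) (i : ι) :
    ∃ x, l i x = 0 ∧ ∀ j ≠ i, 0 < l j x := by
  obtain ⟨x, hx, hpos⟩ := h.isFace_singleton i
  exact ⟨x, mem_commonKer.mp hx i (mem_singleton_self i), fun j hj => hpos j (by simpa using hj)⟩

theorem exists_mem_ker_apply_ne_zero (h : IsFacetSystem l) (hij : i ≠ j) :
    ∃ x ∈ LinearMap.ker (l i), l j x ≠ 0 :=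
  let ⟨x, hx, hpos⟩ := h.exists_facet_point i
  ⟨x, hx, (hpos j hij.symm).ne'⟩

variable [IsStrictOrderedRing K]

theorem exists_mem_commonKer_pair_apply_ne_zero (h : IsFacetSystem l) (hij : i ≠ j)
    (hki : k ≠ i) (hkj : k ≠ j) : ∃ x ∈ commonKer l {i, j}, l k x ≠ 0 := by
  by_contra! hcon
  obtain ⟨α, β, hk⟩ : ∃ α β : K, α • l i + β • l j = l k := by
    have hspan := mem_span_of_iInf_ker_le_ker (L := ![l i, l j]) (K := l k) fun x hx => by
      simp only [Submodule.mem_iInf, Fin.forall_fin_two] at hx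
      exact hcon x (mem_commonKer_pair.mpr hx)
    simpa only [Matrix.range_cons, Matrix.range_empty, Set.union_empty, Set.singleton_union,
      Submodule.mem_span_pair] using hspan
  have heval (x : V) : l k x = α * l i x + β * l j x := by rw [← hk]; rfl
  obtain ⟨x, hxi, hx⟩ := h.exists_facet_point i
  obtain ⟨y, hyj, hy⟩ := h.exists_facet_point j
  obtain ⟨z, hzk, hz⟩ := h.exists_facet_point k
  have hβ : 0 < β := pos_of_mul_pos_left (by simpa [heval, hxi] using hx k hki) (hx j hij.symm).le
  have hα : 0 < α := pos_of_mul_pos_left (by simpa [heval, hyj] using hy k hkj) (hy i hij).le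
  have hpos := add_pos (mul_pos hα (hz i hki.symm)) (mul_pos hβ (hz j hkj.symm))
  rw [← heval, hzk] at hpos
  exact hpos.false

end IsFacetSystem

variable [IsStrictOrderedRing K]

theorem exists_forall_mul_le_mul (hs : s.Nonempty) (a b : ι → K) (hb : ∀ i ∈ s, 0 < b i) :
    ∃ m ∈ s, ∀ j ∈ s, a m * b j ≤ a j * b m := by
  obtain ⟨m, hm, hmin⟩ := s.exists_min_image (fun i => a i / b i) hs
  exact ⟨m, hm, fun j hj => (div_le_div_iff₀ (hb m hm) (hb j hj)).mp (hmin j hj)⟩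

theorem IsFace.exists_forall_ne_zero [Finite ι] {κ : Type*} [Finite κ] (hs : IsFace l s)
    (a : κ → Module.Dual K V) (ha : ∀ k, ∃ z ∈ commonKer l s, a k z ≠ 0) :
    ∃ x ∈ commonKer l s, (∀ i ∉ s, 0 < l i x) ∧ ∀ k, a k x ≠ 0 := by
  obtain ⟨c, hc, hpos⟩ := hs
  obtain ⟨z, hz, haz⟩ := Module.Dual.exists_forall_mem_ne_zero_of_forall_exists _ a ha
  have hpos' : ∀ᶠ e : K in atTop, ∀ i ∉ s, 0 < l i (z + e • c) := by
    refine eventually_all.mpr fun i => ?_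
    by_cases hi : i ∈ s
    · exact .of_forall fun _ h => absurd hi h
    · simp only [hi, not_false_eq_true, forall_const, map_add, map_smul, smul_eq_mul]
      exact (tendsto_atTop_add_const_left _ _
        (tendsto_id.atTop_mul_const (hpos i hi))).eventually_gt_atTop 0
  have ha' : ∀ᶠ e : K in atTop, ∀ k, a k (z + e • c) ≠ 0 :=
    eventually_all.mpr fun k =>
      (eventually_cofinite_apply_add_smul_ne_zero (.inl (haz k))).filter_mono atTop_le_cofinite
  obtain ⟨e, hepos, hea⟩ := (hpos'.and ha').exists
  exact ⟨z + e • c, add_mem hz (Submodule.smul_mem _ e hc), hepos, hea⟩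

namespace IsFacetSystem

-- The ray from `x` in the direction of a generic point `c` of the facet `i` enters that facet
-- through the relative interior of a ridge, and the other facet `m` at this ridge has `l m x < 0`.
theorem nonneg_of_forall_facetAdj [Finite ι] (h : IsFacetSystem l) {x : V} (hx : l i x = 0)
    (hadj : ∀ j, FacetAdj l i j → 0 ≤ l j x) (k : ι) : 0 ≤ l k x := by
  have := Fintype.ofFinite ι
  by_contra! hk
  have hki : k ≠ i := by rintro rfl; exact hk.ne hx
  let T := {p : ι × ι // p.1 ≠ i ∧ p.2 ≠ i ∧ p.1 ≠ p.2 ∧ l p.1 x ≠ 0}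
  obtain ⟨c, hc, hpos, hgen⟩ := (h.isFace_singleton i).exists_forall_ne_zero
    (fun p : T => l p.1.1 x • l p.1.2 - l p.1.2 x • l p.1.1) fun ⟨⟨m, j⟩, hm, hj, hmj, hmx⟩ => by
      obtain ⟨z, hz, hjz⟩ := h.exists_mem_commonKer_pair_apply_ne_zero hm.symm hj hmj.symm
      rw [mem_commonKer_pair] at hz
      exact ⟨z, by simpa [mem_commonKer] using hz.1, by simp [hz.2, hmx, hjz]⟩
  simp only [mem_commonKer, mem_singleton, forall_eq] at hc hpos
  obtain ⟨m, hm, hmin⟩ := exists_forall_mul_le_mul (s := univ.erase i) ⟨k, by simpa using hki⟩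
    (fun j => l j x) (fun j => l j c) fun j hj => hpos j (ne_of_mem_erase hj)
  replace hm := ne_of_mem_erase hm
  have hmx : l m x < 0 := by
    have hmk := hmin k (by simpa using hki)
    nlinarith [hpos k hki, hpos m hm]
  refine hmx.not_ge (hadj m ⟨hm.symm, l m c • x - l m x • c, ?_, fun j hj => ?_⟩)
  · simp [mem_commonKer_pair, hx, hc, mul_comm]
  · obtain ⟨hji, hjm⟩ : j ≠ i ∧ j ≠ m := by simpa using hj
    have hle := hmin j (by simpa using hji)
    have hne := hgen ⟨(m, j), hm, hji, hjm.symm, hmx.ne⟩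
    simp only [LinearMap.sub_apply, LinearMap.smul_apply, smul_eq_mul, sub_ne_zero] at hne
    simp only [map_sub, map_smul, smul_eq_mul, sub_pos, mul_comm (l m c)]
    exact lt_of_le_of_ne hle hne

-- On the ray from a point `x` of the facet `k` in the direction `-c`, with `c` interior, the form
-- `l k` is negative; but the first hyperplane of `S` is met at a point that satisfies all the
-- inequalities of its facet.
theorem mem_of_facetAdj_closed [Finite ι] (h : IsFacetSystem l) {S : Set ι} (hi : i ∈ S)
    (hS : ∀ i ∈ S, ∀ j, FacetAdj l i j → j ∈ S) (k : ι) : k ∈ S := by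
  have := Fintype.ofFinite ι
  by_contra hk
  obtain ⟨c, -, hc⟩ := h.isFace_empty
  obtain ⟨x, hxk, hx⟩ := h.exists_facet_point k
  simp only [notMem_empty, not_false_eq_true, forall_const] at hc
  obtain ⟨m, hm, hmin⟩ := exists_forall_mul_le_mul (s := S.toFinset) ⟨i, by simpa using hi⟩
    (fun j => l j x) (fun j => l j c) fun j _ => hc j
  simp only [Set.mem_toFinset] at hm hmin
  have hmx : 0 < l m x := hx m (by rintro rfl; exact hk hm)
  have hk_nonneg := h.nonneg_of_forall_facetAdj (i := m) (x := l m c • x - l m x • c)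
    (by simp [mul_comm])
    (fun j hj => by simpa [mul_comm (l m c)] using hmin j (hS m hm j hj)) k
  have hk_neg : l k (l m c • x - l m x • c) < 0 := by simpa [hxk] using mul_pos hmx (hc k)
  exact hk_neg.not_ge hk_nonneg

theorem isFacetSystem_facetForms [Finite ι] (h : IsFacetSystem l) (i : ι) :
    IsFacetSystem (facetForms l i) where
  eq_zero_of_forall_eq_zero := fun ⟨x, hx⟩ h0 => Subtype.ext <| h.eq_zero_of_forall_eq_zero x
    fun k => by
      replace h0 (j) (hj : FacetAdj l i j) : l j x = 0 := h0 ⟨j, hj⟩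
      have hpos := h.nonneg_of_forall_facetAdj hx (fun j hj => (h0 j hj).ge) k
      have hneg := h.nonneg_of_forall_facetAdj (x := -x) (by simpa using hx)
        (fun j hj => by simp [h0 j hj]) k
      exact le_antisymm (by simpa using hneg) hpos
  isFace_empty := by
    convert (h.isFace_singleton i).isFace_facetForms (mem_singleton_self i)
    ext ⟨j, hj⟩
    simpa using hj.1.symm
  isFace_singleton := fun ⟨j, hj⟩ => by
    convert hj.2.isFace_facetForms (mem_insert_self i _)
    ext ⟨k, hk⟩
    simp [hk.1.symm]

end IsFacetSystem

end Cones

section Arrangement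

open Filter

variable {K V ι : Type*} [Field K] [AddCommGroup V] [Module K V]

theorem exists_eventually_forall_le_ker [Infinite K] [Finite ι] (l : ι → Module.Dual K V)
    (L : Submodule K V) (v : V) :
    ∃ z ∈ L, ∀ᶠ e : K in cofinite, ∀ k, l k (v + e • z) = 0 → L ≤ LinearMap.ker (l k) := by
  obtain ⟨z, hz, hne⟩ := Module.Dual.exists_forall_mem_ne_zero_of_forall_exists L
    (fun k : {k // ¬ L ≤ LinearMap.ker (l k)} => l k) fun k => SetLike.not_le_iff_exists.mp k.2
  refine ⟨z, hz, eventually_all.mpr fun k => ?_⟩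
  by_cases hk : L ≤ LinearMap.ker (l k)
  · exact .of_forall fun _ _ => hk
  · exact (eventually_cofinite_apply_add_smul_ne_zero (.inr (hne ⟨k, hk⟩))).mono
      fun e he h0 => absurd h0 he

theorem finrank_span_image_add_finrank_commonKer [FiniteDimensional K V]
    (l : ι → Module.Dual K V) (s : Finset ι) :
    Module.finrank K (Submodule.span K (l '' s)) + Module.finrank K (commonKer l s) =
      Module.finrank K V := by
  have hker : commonKer l s = (Submodule.span K (l '' s)).dualCoannihilator :=
    SetLike.coe_injective (by ext x; simp [mem_commonKer])
  rw [hker, Subspace.finrank_add_finrank_dualCoannihilator_eq]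

theorem finrank_le_card_add_finrank_commonKer [FiniteDimensional K V] (l : ι → Module.Dual K V)
    (s : Finset ι) : Module.finrank K V ≤ #s + Module.finrank K (commonKer l s) := by
  rw [← finrank_span_image_add_finrank_commonKer l s, ← coe_image]
  gcongr
  exact (finrank_span_finset_le_card _).trans card_image_le

variable [Fintype ι]

/-- The indices of the forms vanishing at `v`. -/
def activeSet (l : ι → Module.Dual K V) (v : V) : Finset ι := {i | l i v = 0}

theorem mem_activeSet {l : ι → Module.Dual K V} {v : V} {i : ι} :
    i ∈ activeSet l v ↔ l i v = 0 := by
  simp [activeSet]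

theorem mem_commonKer_activeSet (l : ι → Module.Dual K V) (v : V) :
    v ∈ commonKer l (activeSet l v) :=
  mem_commonKer.mpr fun _ => mem_activeSet.mp

end Arrangement

section Adjoints

open Filter

variable {K A V ι : Type*} [Field K] [LinearOrder K] [CommRing A] [Algebra K A]
  [AddCommGroup V] [Module K V] [Fintype ι] {l : ι → Module.Dual K V} {f g : V → A} {i j : ι}

/-- The order to which adjoints of the cone `{x | ∀ i, 0 ≤ l i x}` vanish at `v`: the nullity of the
flat through `v`, plus one if this flat is not spanned by a face of the cone. The rank of the flat
enters as the codimension of its zero space. -/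
def adjointOrder (l : ι → Module.Dual K V) (v : V) : ℕ :=
  #(activeSet l v) + Module.finrank K (commonKer l (activeSet l v))
    + (if IsFace l (activeSet l v) then 0 else 1) - Module.finrank K V

/-- The polynomial function `f` is a, possibly zero, adjoint of the cone `{x | ∀ i, 0 ≤ l i x}`. It
need not be homogeneous: only its degree is bounded, by the number of facets minus the dimension. -/
structure IsAdjoint (l : ι → Module.Dual K V) (f : V → A) : Prop where
  isPolyFun : IsPolyFun K (Fintype.card ι + 1 - Module.finrank K V) f
  vanishesToOrder : ∀ v ≠ 0, VanishesToOrder K f v (adjointOrder l v)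

/-- The facets other than `i` that share no ridge with the facet `i`. -/
def nonadjacent (l : ι → Module.Dual K V) (i : ι) : Finset ι :=
  {j | i ≠ j ∧ ¬ FacetAdj l i j}

theorem mem_nonadjacent : j ∈ nonadjacent l i ↔ i ≠ j ∧ ¬ FacetAdj l i j := by
  simp [nonadjacent]

theorem card_eq_card_subtype_facetAdj_add_card_nonadjacent {s : Finset ι} (hi : i ∈ s) :
    #s = #(s.subtype (FacetAdj l i)) + #{j ∈ nonadjacent l i | j ∈ s} + 1 := by
  have hadj : {j ∈ s.erase i | FacetAdj l i j} = {j ∈ s | FacetAdj l i j} := by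
    rw [filter_erase, erase_eq_of_notMem fun hmem => (mem_filter.mp hmem).2.1 rfl]
  have hnonadj : {j ∈ s.erase i | ¬ FacetAdj l i j} = {j ∈ nonadjacent l i | j ∈ s} := by
    ext j
    simp only [mem_filter, mem_erase, mem_nonadjacent, ne_comm (a := i)]
    tauto
  rw [← card_erase_add_one hi, ← card_filter_add_card_filter_not (FacetAdj l i), hadj, hnonadj,
    card_subtype]

theorem activeSet_facetForms (w : LinearMap.ker (l i)) :
    activeSet (facetForms l i) w = (activeSet l w).subtype (FacetAdj l i) := by
  ext j
  simp [mem_activeSet, facetForms]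

theorem IsAdjoint.const_mul_add_const_mul (hf : IsAdjoint l f) (hg : IsAdjoint l g) (a b : A) :
    IsAdjoint l fun x => a * f x + b * g x where
  isPolyFun := (hf.isPolyFun.const_mul a).add (hg.isPolyFun.const_mul b)
  vanishesToOrder v hv :=
    (hf.vanishesToOrder v hv).const_mul_add_const_mul (hg.vanishesToOrder v hv) a b

theorem IsFacetSystem.adjointOrder_facetForms_le (h : IsFacetSystem l) (w : LinearMap.ker (l i))
    (hw : (commonKer (facetForms l i) (activeSet (facetForms l i) w)).map
      (LinearMap.ker (l i)).subtype ≤ commonKer l (activeSet l w)) :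
    adjointOrder (facetForms l i) w ≤
      adjointOrder l w - #{j ∈ nonadjacent l i | l j w = 0} := by
  have := h.finiteDimensional
  have hi : i ∈ activeSet l (w : V) := mem_activeSet.mpr w.2
  have hdim := Submodule.finrank_mono hw
  have hcard := card_eq_card_subtype_facetAdj_add_card_nonadjacent (l := l) hi
  have hface (hfull : IsFace l (activeSet l (w : V))) :
      IsFace (facetForms l i) (activeSet (facetForms l i) w) :=
    activeSet_facetForms w ▸ hfull.isFace_facetForms hi
  rw [Submodule.finrank_map_subtype_eq] at hdim
  simp only [mem_activeSet, ← activeSet_facetForms] at hcard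
  have hker := h.finrank_ker_add_one i
  unfold adjointOrder
  by_cases hfull : IsFace l (activeSet l (w : V))
  · rw [if_pos hfull, if_pos (hface hfull)]
    omega
  · rw [if_neg hfull]
    split_ifs <;> omega

variable [IsStrictOrderedRing K] [IsDomain A]

namespace IsAdjoint

theorem apply_eq_zero_of_mem_nonadjacent (h : IsFacetSystem l) (hf : IsAdjoint l f)
    (hj : j ∈ nonadjacent l i) {x : V} (hx : x ∈ commonKer l {i, j}) : f x = 0 := by
  obtain ⟨hij, hadj⟩ := mem_nonadjacent.mp hj
  have hface : ¬ IsFace l {i, j} := fun hface => hadj ⟨hij, hface⟩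
  obtain ⟨z, hz, hgen⟩ := exists_eventually_forall_le_ker l (commonKer l {i, j}) x
  refine hf.isPolyFun.apply_eq_zero_of_frequently (z := z) (hgen.frequently.mono fun e he => ?_)
  set w := x + e • z
  have hwmem : w ∈ commonKer l {i, j} := add_mem hx (Submodule.smul_mem _ e hz)
  have hactive : activeSet l w = {i, j} := by
    refine Subset.antisymm (fun k hk => ?_) fun k hk =>
      mem_activeSet.mpr (mem_commonKer.mp hwmem k hk)
    by_contra hkij
    obtain ⟨hki, hkj⟩ : k ≠ i ∧ k ≠ j := by simpa using hkij
    obtain ⟨y, hy, hky⟩ := h.exists_mem_commonKer_pair_apply_ne_zero hij hki hkj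
    exact hky (he k (mem_activeSet.mp hk) hy)
  have hw0 : w ≠ 0 := fun hw0 => hface ⟨w, hwmem, fun k hk => by
    rw [← hactive, mem_activeSet, hw0, map_zero] at hk
    exact absurd rfl hk⟩
  have := h.finiteDimensional
  have hdim := finrank_le_card_add_finrank_commonKer l {i, j}
  refine (hf.vanishesToOrder w hw0).apply_eq_zero ?_
  rw [adjointOrder, hactive, if_neg hface]
  omega

theorem exists_eq_prod_nonadjacent_smul (h : IsFacetSystem l) (hf : IsAdjoint l f) (i : ι) :
    ∃ g : LinearMap.ker (l i) → A,
      IsPolyFun K (Fintype.card {j // FacetAdj l i j} + 1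
        - Module.finrank K (LinearMap.ker (l i))) g ∧
      ∀ x : LinearMap.ker (l i), f x = (∏ j ∈ nonadjacent l i, l j x) • g x := by
  have hne {j} (hj : j ∈ nonadjacent l i) : i ≠ j := (mem_nonadjacent.mp hj).1
  obtain ⟨g, hg, hfg⟩ := (hf.isPolyFun.comp_linearMap
    (LinearMap.ker (l i)).subtype).exists_eq_prod_smul (s := nonadjacent l i)
    (l := fun j => (l j).domRestrict (LinearMap.ker (l i)))
    (fun j hj => by
      obtain ⟨x, hx, hjx⟩ := h.exists_mem_ker_apply_ne_zero (hne hj)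
      exact DFunLike.ne_iff.mpr ⟨⟨x, hx⟩, hjx⟩)
    (fun j hj k hk hjk => by
      obtain ⟨x, hx, hkx⟩ :=
        h.exists_mem_commonKer_pair_apply_ne_zero (hne hj) (hne hk).symm hjk.symm
      rw [mem_commonKer_pair] at hx
      exact ⟨⟨x, hx.1⟩, hx.2, hkx⟩)
    (fun j hj x hjx => hf.apply_eq_zero_of_mem_nonadjacent h hj
      (mem_commonKer_pair.mpr ⟨x.2, hjx⟩))
  refine ⟨g, hg.mono ?_, hfg⟩
  have hcard := card_eq_card_subtype_facetAdj_add_card_nonadjacent (l := l) (mem_univ i)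
  simp only [mem_univ, filter_true, subtype_univ, card_univ] at hcard
  change Fintype.card ι = Fintype.card {j // FacetAdj l i j} + _ + 1 at hcard
  have hker := h.finrank_ker_add_one i
  omega

theorem vanishesToOrder_of_map_commonKer_le {m : ℕ} (h : IsFacetSystem l) (hf : IsAdjoint l f)
    {g : LinearMap.ker (l i) → A} (hg : IsPolyFun K m g)
    (hfg : ∀ x : LinearMap.ker (l i), f x = (∏ j ∈ nonadjacent l i, l j x) • g x)
    {w : LinearMap.ker (l i)} (hw : (w : V) ≠ 0)
    (hflat : (commonKer (facetForms l i) (activeSet (facetForms l i) w)).map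
      (LinearMap.ker (l i)).subtype ≤ commonKer l (activeSet l w)) :
    VanishesToOrder K g w (adjointOrder (facetForms l i) w) := by
  let r (j : ι) : Module.Dual K (LinearMap.ker (l i)) := (l j).domRestrict (LinearMap.ker (l i))
  have hr (j) (hj : j ∈ nonadjacent l i) : r j ≠ 0 := by
    obtain ⟨x, hx, hjx⟩ := h.exists_mem_ker_apply_ne_zero (mem_nonadjacent.mp hj).1
    exact DFunLike.ne_iff.mpr ⟨⟨x, hx⟩, hjx⟩
  have hfw : VanishesToOrder K (fun x => (∏ j ∈ nonadjacent l i, r j x) • g x) w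
      (adjointOrder l w) := by
    convert (hf.vanishesToOrder w hw).comp_linearMap (w := w) (LinearMap.ker (l i)).subtype using 2
    exact (hfg _).symm
  refine (hg.vanishesToOrder_of_prod_smul hr hfw).mono ?_
  convert h.adjointOrder_facetForms_le w hflat
  rfl

theorem vanishesToOrder_of_eq_prod_nonadjacent_smul {m : ℕ} (h : IsFacetSystem l)
    (hf : IsAdjoint l f) {g : LinearMap.ker (l i) → A} (hg : IsPolyFun K m g)
    (hfg : ∀ x : LinearMap.ker (l i), f x = (∏ j ∈ nonadjacent l i, l j x) • g x)
    {v : LinearMap.ker (l i)} (hv : v ≠ 0) :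
    VanishesToOrder K g v (adjointOrder (facetForms l i) v) := by
  set L := commonKer (facetForms l i) (activeSet (facetForms l i) v) with hL
  have hvL : v ∈ L := mem_commonKer_activeSet (facetForms l i) v
  obtain ⟨z, hz, hgen⟩ := exists_eventually_forall_le_ker
    (fun k => (l k).domRestrict (LinearMap.ker (l i))) L v
  refine hg.vanishesToOrder_of_frequently (z := z) (hgen.frequently.mono fun e he => ?_)
  set w := v + e • z
  have hwL : w ∈ L := add_mem hvL (Submodule.smul_mem _ e hz)
  have hactive : activeSet (facetForms l i) w = activeSet (facetForms l i) v :=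
    Subset.antisymm
      (fun j hj => mem_activeSet.mpr (he j ((mem_activeSet (l := facetForms l i)).mp hj) hvL))
      fun j hj => mem_activeSet.mpr (mem_commonKer.mp hwL j hj)
  have hw0 : (w : V) ≠ 0 := fun hw0 => hv <| Subtype.ext <|
    h.eq_zero_of_forall_eq_zero v fun k => he k (by simp [hw0]) hvL
  have horder : adjointOrder (facetForms l i) w = adjointOrder (facetForms l i) v := by
    unfold adjointOrder
    rw [hactive]
  rw [← horder]
  refine hf.vanishesToOrder_of_map_commonKer_le h hg hfg hw0 ?_
  rw [hactive, ← hL]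
  rintro _ ⟨x, hx, rfl⟩
  exact mem_commonKer.mpr fun k hk => he k ((mem_activeSet (l := l)).mp hk) hx

theorem exists_restrict (h : IsFacetSystem l) (hf : IsAdjoint l f) (i : ι) :
    ∃ g, IsAdjoint (facetForms l i) g ∧
      ∀ x : LinearMap.ker (l i), f x = (∏ j ∈ nonadjacent l i, l j x) • g x := by
  obtain ⟨g, hg, hfg⟩ := hf.exists_eq_prod_nonadjacent_smul h i
  exact ⟨g, ⟨hg, fun v hv => hf.vanishesToOrder_of_eq_prod_nonadjacent_smul h hg hfg hv⟩, hfg⟩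

theorem eq_zero_of_forall_facet (h : IsFacetSystem l) (hf : IsAdjoint l f)
    (hV : Module.finrank K V ≠ 0) (hf0 : ∀ i x, l i x = 0 → f x = 0) (x : V) : f x = 0 := by
  obtain ⟨g, hg, hfg⟩ := hf.isPolyFun.exists_eq_prod_smul (s := univ) (fun i _ => h.ne_zero i)
    (fun i _ j _ hij => h.exists_mem_ker_apply_ne_zero hij) fun i _ => hf0 i
  have hdeg : Fintype.card ι + 1 - Module.finrank K V - #(univ : Finset ι) = 0 := by
    rw [card_univ]
    omega
  rw [hdeg] at hg
  rw [hfg, hg.apply_eq_zero, smul_zero]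

theorem eq_zero_of_facet (h : IsFacetSystem l) (hf : IsAdjoint l f)
    (hf0 : ∀ x, l i x = 0 → f x = 0) (x : V) : f x = 0 := by
  induction hN : Module.finrank K V generalizing V ι with
  | zero =>
    have := h.finiteDimensional
    have : Subsingleton V := Module.finrank_zero_iff.mp hN
    exact hf0 x (by rw [Subsingleton.elim x 0, map_zero])
  | succ N ih =>
    refine hf.eq_zero_of_forall_facet h (by omega) ?_ x
    refine h.mem_of_facetAdj_closed (S := {j | ∀ x, l j x = 0 → f x = 0}) hf0 fun j hj k hjk => ?_
    obtain ⟨g, hg, hfg⟩ := hf.exists_restrict h k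
    have hgj : ∀ x ∈ LinearMap.ker (facetForms l k ⟨j, hjk.symm⟩), g x = 0 := by
      refine hg.isPolyFun.eq_zero_of_prod_smul_eq_zero (s := nonadjacent l k)
        (l := fun m => (l m).domRestrict (LinearMap.ker (l k))) (fun m hm => ?_)
        fun x hx => (hfg x).symm.trans (hj x hx)
      obtain ⟨hkm, hadj⟩ := mem_nonadjacent.mp hm
      have hmj : m ≠ j := by rintro rfl; exact hadj hjk.symm
      obtain ⟨y, hy, hmy⟩ :=
        h.exists_mem_commonKer_pair_apply_ne_zero hjk.1.symm hkm.symm hmj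
      rw [mem_commonKer_pair] at hy
      exact ⟨⟨y, hy.1⟩, hy.2, hmy⟩
    intro x hx
    have hker := h.finrank_ker_add_one k
    rw [hfg ⟨x, hx⟩, ih (h.isFacetSystem_facetForms k) hg hgj ⟨x, hx⟩ (by omega), smul_zero]

end IsAdjoint

theorem IsAdjoint.exists_const_mul_add_const_mul_eq_zero (h : IsFacetSystem l)
    (hf : IsAdjoint l f) (hg : IsAdjoint l g) :
    ∃ a b : A, (a, b) ≠ (0, 0) ∧ ∀ x, a * f x + b * g x = 0 := by
  induction hN : Module.finrank K V generalizing V ι with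
  | zero =>
    have := h.finiteDimensional
    have : Subsingleton V := Module.finrank_zero_iff.mp hN
    by_cases hf0 : f 0 = 0
    · exact ⟨1, 0, by simp, fun x => by simp [Subsingleton.elim x 0, hf0]⟩
    · refine ⟨g 0, -f 0, by simp [hf0], fun x => ?_⟩
      rw [Subsingleton.elim x 0]
      ring
  | succ N ih =>
    obtain ⟨i⟩ := h.nonempty (by omega)
    obtain ⟨f', hf', hff'⟩ := hf.exists_restrict h i
    obtain ⟨g', hg', hgg'⟩ := hg.exists_restrict h i
    have hker := h.finrank_ker_add_one i
    obtain ⟨a, b, hab, hfg'⟩ := ih (h.isFacetSystem_facetForms i) hf' hg' (by omega)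
    refine ⟨a, b, hab, (hf.const_mul_add_const_mul hg a b).eq_zero_of_facet h (i := i) ?_⟩
    intro x hx
    rw [hff' ⟨x, hx⟩, hgg' ⟨x, hx⟩, mul_smul_comm, mul_smul_comm, ← smul_add, hfg', smul_zero]

end Adjoints

section LinearForms

variable {K A σ : Type*} [Field K]

/-- The linear form given by the degree-one part of a polynomial. -/
def linearForm [Fintype σ] : MvPolynomial σ K →ₗ[K] Module.Dual K (σ → K) :=
  ∑ i, (lcoeff K (Finsupp.single i 1)).smulRight (LinearMap.proj i)

theorem linearForm_apply [Fintype σ] {p : MvPolynomial σ K} (hp : p.IsHomogeneous 1)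
    (x : σ → K) : linearForm p x = eval x p := by
  have hspan : p ∈ Submodule.span K (Set.range (X : σ → MvPolynomial σ K)) := by
    rw [← homogeneousSubmodule_one_eq_span_X]
    exact hp
  refine LinearMap.eqOn_span (f := linearForm.flip x) (g := (aeval x).toLinearMap) ?_ hspan
  rintro _ ⟨i, rfl⟩
  simp [linearForm, coeff_X, Finsupp.single_left_inj]

theorem linearForm_injOn [Fintype σ] [Infinite K] :
    Set.InjOn (linearForm (σ := σ) (K := K)) (homogeneousSubmodule σ K 1) := fun p hp q hq hpq =>
  MvPolynomial.funext fun x => by rw [← linearForm_apply hp, ← linearForm_apply hq, hpq]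

variable [CommRing A] [Algebra K A]

theorem vanishesToOrder_evalScalars {I : Ideal (MvPolynomial σ A)} {v : σ → K} {k : ℕ}
    {f : MvPolynomial σ A} (hI : ∀ p ∈ I, evalScalars K p v = 0) (hf : f ∈ I ^ k) :
    VanishesToOrder K (evalScalars K f) v k := by
  intro u
  let φ : MvPolynomial σ A →+* Polynomial A := eval₂Hom Polynomial.C fun i =>
    Polynomial.C (algebraMap K A (v i)) + Polynomial.C (algebraMap K A (u i)) * Polynomial.X
  have heval (p : MvPolynomial σ A) (t : K) :
      evalScalars K p (v + t • u) = (φ p).eval (algebraMap K A t) := by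
    rw [← Polynomial.coe_evalRingHom, ← RingHom.comp_apply, evalScalars]
    congr 1
    ext
    · simp [φ]
    · simp [φ, mul_comm (algebraMap K A t)]
  have hmap : I.map φ ≤ Ideal.span {Polynomial.X} := Ideal.map_le_iff_le_comap.mpr fun p hp => by
    rw [Ideal.mem_comap, Ideal.mem_span_singleton, Polynomial.X_dvd_iff,
      Polynomial.coeff_zero_eq_eval_zero]
    simpa [hI p hp] using (heval p 0).symm
  refine ⟨φ f, ?_, heval f⟩
  rw [← Ideal.mem_span_singleton, ← Ideal.span_singleton_pow]
  exact Ideal.pow_right_mono hmap k (Ideal.map_pow φ I k ▸ Ideal.mem_map_of_mem φ hf)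

theorem eq_zero_of_forall_evalScalars_eq_zero [Infinite K] [IsDomain A] {f : MvPolynomial σ A}
    (hf : ∀ x, evalScalars K f x = 0) : f = 0 := by
  refine MvPolynomial.funext_set (fun _ => Set.range (algebraMap K A))
    (fun _ => Set.infinite_range_of_injective (algebraMap K A).injective) fun x hx => ?_
  choose y hy using fun i => hx i (Set.mem_univ i)
  obtain rfl : (fun i => algebraMap K A (y i)) = x := funext hy
  simpa [evalScalars] using hf y

end LinearForms

section Polytopes

theorem isFace_of_mem_iff_forall_eq_zero {K V ι : Type*} [Field K] [LinearOrder K]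
    [IsStrictOrderedRing K] [AddCommGroup V] [Module K V] [Finite ι] {l : ι → Module.Dual K V}
    {s : Finset ι} {B : Set V} (hB : ∀ y ∈ B, ∀ i, 0 ≤ l i y)
    (hs : ∀ i, i ∈ s ↔ ∀ y ∈ B, l i y = 0) : IsFace l s := by
  have := Fintype.ofFinite ι
  have hex (i : ι) (hi : i ∉ s) : ∃ y ∈ B, l i y ≠ 0 := by simpa [hs] using hi
  choose! p hpB hp using hex
  refine ⟨∑ i ∈ sᶜ, p i, mem_commonKer.mpr fun i hi => ?_, fun i hi => ?_⟩
  · rw [map_sum]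
    exact sum_eq_zero fun j hj => (hs i).mp hi _ (hpB j (mem_compl.mp hj))
  · rw [map_sum]
    exact sum_pos' (fun j hj => hB _ (hpB j (mem_compl.mp hj)) i)
      ⟨i, mem_compl.mpr hi, (hB _ (hpB i hi) i).lt_of_ne' (hp i hi)⟩

theorem eq_zero_of_isBounded_of_forall_add_smul_mem {E : Type*} [NormedAddCommGroup E]
    [NormedSpace ℝ E] {S : Set E} (hS : Bornology.IsBounded S) {c u : E}
    (hu : ∀ t : ℝ, 0 ≤ t → c + t • u ∈ S) : u = 0 := by
  obtain ⟨R, hR⟩ := hS.exists_norm_le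
  by_contra hu0
  have hgrow : Filter.Tendsto (fun t : ℝ => t * ‖u‖) Filter.atTop Filter.atTop :=
    Filter.tendsto_id.atTop_mul_const (norm_pos_iff.mpr hu0)
  obtain ⟨t, ht, htR⟩ :=
    ((Filter.eventually_ge_atTop 0).and (hgrow.eventually_gt_atTop (R + ‖c‖))).exists
  have hle : t * ‖u‖ ≤ R + ‖c‖ := calc
    t * ‖u‖ = ‖(c + t • u) - c‖ := by rw [add_sub_cancel_left, norm_smul, Real.norm_of_nonneg ht]
    _ ≤ ‖c + t • u‖ + ‖c‖ := norm_sub_le _ _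
    _ ≤ R + ‖c‖ := by gcongr; exact hR _ (hu t ht)
  exact htR.not_ge hle

variable {n d : ℕ}

theorem finrank_direction_add_one_le {B : Set (Fin n → ℝ)} (hB : B.Nonempty)
    {M : Submodule ℝ (Fin (n + 1) → ℝ)} (hM : ∀ y ∈ B, lift1 y ∈ M) :
    Module.finrank ℝ (affineSpan ℝ B).direction + 1 ≤ Module.finrank ℝ M := by
  let tail : (Fin (n + 1) → ℝ) →ₗ[ℝ] Fin n → ℝ := LinearMap.funLeft ℝ ℝ Fin.succ
  let H : Submodule ℝ (Fin (n + 1) → ℝ) := LinearMap.ker (LinearMap.proj 0)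
  have hle : (affineSpan ℝ B).direction ≤ (M ⊓ H).map tail := by
    rw [direction_affineSpan, vectorSpan_def, Submodule.span_le]
    rintro _ ⟨a, ha, b, hb, rfl⟩
    refine ⟨lift1 a - lift1 b, ⟨M.sub_mem (hM a ha) (hM b hb), by simp [H, lift1]⟩, ?_⟩
    ext j
    simp [tail, lift1, LinearMap.funLeft_apply]
  obtain ⟨y, hy⟩ := hB
  have hlt : M ⊓ H < M := inf_le_left.lt_of_not_ge fun hMH => by
    simpa [H, lift1] using (hMH (hM y hy)).2
  calc Module.finrank ℝ (affineSpan ℝ B).direction + 1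
      ≤ Module.finrank ℝ ((M ⊓ H).map tail) + 1 := by grw [Submodule.finrank_mono hle]
    _ ≤ Module.finrank ℝ ↥(M ⊓ H) + 1 := by grw [Submodule.finrank_map_le]
    _ ≤ Module.finrank ℝ M := Submodule.finrank_lt_finrank_of_lt hlt

theorem evalScalars_eq_zero_of_mem_pointIdealC {v : Fin (n + 1) → ℝ}
    {p : MvPolynomial (Fin (n + 1)) ℂ} (hp : p ∈ pointIdealC v) : evalScalars ℝ p v = 0 := by
  have hle : pointIdealC v ≤ RingHom.ker (eval fun i => (v i : ℂ)) :=
    Ideal.span_le.mpr fun _ hq => hq.2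
  exact hle hp

variable {ℓ : Fin d → MvPolynomial (Fin (n + 1)) ℝ}

/-- The facet equations of the cone over the polytope, as linear forms on `ℝ^{n+1}`. -/
def coneForms (ℓ : Fin d → MvPolynomial (Fin (n + 1)) ℝ) (i : Fin d) :
    Module.Dual ℝ (Fin (n + 1) → ℝ) :=
  linearForm (ℓ i)

namespace IsPolytopeSetup

theorem coneForms_apply (hP : IsPolytopeSetup ℓ) (i : Fin d) (x : Fin (n + 1) → ℝ) :
    coneForms ℓ i x = eval x (ℓ i) :=
  linearForm_apply (hP.hhom i) x

theorem coneForms_ne_zero (hP : IsPolytopeSetup ℓ) (i : Fin d) : coneForms ℓ i ≠ 0 := fun h0 =>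
  hP.hne i (linearForm_injOn (hP.hhom i) (Submodule.zero_mem _) (h0.trans (map_zero _).symm))

theorem nonneg_of_mem_lift1_image (hP : IsPolytopeSetup ℓ) {B : Set (Fin n → ℝ)}
    (hB : B ⊆ polytopeOf ℓ) : ∀ x ∈ lift1 '' B, ∀ i, 0 ≤ coneForms ℓ i x := by
  rintro _ ⟨y, hy, rfl⟩ i
  rw [hP.coneForms_apply]
  exact hB hy i

theorem nonempty_polytopeOf (hP : IsPolytopeSetup ℓ) : (polytopeOf ℓ).Nonempty := by
  have hd := hP.hd
  obtain ⟨y, hy⟩ := hP.hfacet_ne ⟨0, by omega⟩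
  exact ⟨y, hy.1⟩

theorem finrank_ker_coneForms (hP : IsPolytopeSetup ℓ) (i : Fin d) :
    Module.finrank ℝ (LinearMap.ker (coneForms ℓ i)) = n := by
  simpa using Module.Dual.finrank_ker_add_one_of_ne_zero (hP.coneForms_ne_zero i)

theorem isFace_empty (hP : IsPolytopeSetup ℓ) : IsFace (coneForms ℓ) ∅ := by
  refine isFace_of_mem_iff_forall_eq_zero (hP.nonneg_of_mem_lift1_image subset_rfl) fun i =>
    iff_of_false (notMem_empty i) fun h0 => ?_
  have hdim := finrank_direction_add_one_le hP.nonempty_polytopeOf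
    (M := LinearMap.ker (coneForms ℓ i)) fun y hy => h0 _ ⟨y, hy, rfl⟩
  rw [hP.hfull, AffineSubspace.direction_top, finrank_top, hP.finrank_ker_coneForms] at hdim
  simp at hdim

theorem ker_coneForms_le_iff (hP : IsPolytopeSetup ℓ) {i j : Fin d} :
    LinearMap.ker (coneForms ℓ i) ≤ LinearMap.ker (coneForms ℓ j) ↔ i = j := by
  refine ⟨fun hle => ?_, fun hij => hij ▸ le_rfl⟩
  have hspan : coneForms ℓ j ∈ Submodule.span ℝ (Set.range fun _ : Unit => coneForms ℓ i) :=
    mem_span_of_iInf_ker_le_ker (by simpa using hle)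
  rw [Set.range_const, Submodule.mem_span_singleton] at hspan
  obtain ⟨c, hc⟩ := hspan
  by_contra hij
  exact hP.hprop i j hij c (linearForm_injOn (Submodule.smul_mem _ c (hP.hhom i)) (hP.hhom j)
    (by rw [map_smul]; exact hc))

theorem isFace_singleton (hP : IsPolytopeSetup ℓ) (i : Fin d) :
    IsFace (coneForms ℓ) {i} := by
  have hi (y) (hy : y ∈ facetOf ℓ i) : coneForms ℓ i (lift1 y) = 0 :=
    (hP.coneForms_apply i _).trans hy.2
  refine isFace_of_mem_iff_forall_eq_zero (B := lift1 '' facetOf ℓ i)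
    (hP.nonneg_of_mem_lift1_image fun y hy => hy.1) fun j => ?_
  rw [mem_singleton, Set.forall_mem_image]
  refine ⟨?_, fun h0 => ?_⟩
  · rintro rfl
    exact hi
  · have hdim := finrank_direction_add_one_le (hP.hfacet_ne i)
      (M := LinearMap.ker (coneForms ℓ i) ⊓ LinearMap.ker (coneForms ℓ j))
      fun y hy => ⟨hi y hy, h0 hy⟩
    rw [hP.hfacet, Nat.sub_add_cancel hP.hn] at hdim
    exact (hP.ker_coneForms_le_iff.mp <| inf_eq_left.mp <|
      Submodule.eq_of_le_of_finrank_le inf_le_left <|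
        (hP.finrank_ker_coneForms i).trans_le hdim).symm

theorem eq_zero_of_nonneg_of_apply_zero (hP : IsPolytopeSetup ℓ) {u : Fin (n + 1) → ℝ}
    (hu0 : u 0 = 0) (hu : ∀ i, 0 ≤ coneForms ℓ i u) : u = 0 := by
  obtain ⟨c, hc⟩ := hP.nonempty_polytopeOf
  have htail : Fin.tail u = 0 := by
    refine eq_zero_of_isBounded_of_forall_add_smul_mem hP.hcpt.isBounded (c := c)
      fun t ht i => ?_
    have hlift : lift1 (c + t • Fin.tail u) = lift1 c + t • u := by
      ext j
      cases j using Fin.cases <;> simp [lift1, hu0, Fin.tail]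
    rw [hlift, ← hP.coneForms_apply, map_add, map_smul, hP.coneForms_apply]
    exact add_nonneg (hc i) (mul_nonneg ht (hu i))
  rw [← Fin.cons_self_tail u, hu0, htail]
  exact Matrix.cons_zero_zero

theorem isFacetSystem (hP : IsPolytopeSetup ℓ) : IsFacetSystem (coneForms ℓ) where
  isFace_empty := hP.isFace_empty
  isFace_singleton := hP.isFace_singleton
  eq_zero_of_forall_eq_zero x hx := by
    by_cases hx0 : x 0 = 0
    · exact hP.eq_zero_of_nonneg_of_apply_zero hx0 fun i => (hx i).ge
    exfalso
    obtain ⟨c, -, hc⟩ := hP.isFace_empty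
    have hcx : c - (c 0 / x 0) • x = 0 := hP.eq_zero_of_nonneg_of_apply_zero (by simp [hx0])
      fun i => by simpa [hx] using (hc i (notMem_empty i)).le
    have hd := hP.hd
    have hpos := hc ⟨0, by omega⟩ (notMem_empty _)
    rw [sub_eq_zero.mp hcx, map_smul, hx, smul_zero] at hpos
    exact hpos.false

theorem activeSet_coneForms (hP : IsPolytopeSetup ℓ) (v : Fin (n + 1) → ℝ) :
    activeSet (coneForms ℓ) v = flatOf ℓ v := by
  ext i
  simp [mem_activeSet, flatOf, hP.coneForms_apply]

theorem mem_commonKer_flatOf (hP : IsPolytopeSetup ℓ) (v : Fin (n + 1) → ℝ) :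
    v ∈ commonKer (coneForms ℓ) (flatOf ℓ v) :=
  hP.activeSet_coneForms v ▸ mem_commonKer_activeSet (coneForms ℓ) v

theorem rkOf_add_finrank_commonKer (hP : IsPolytopeSetup ℓ) (v : Fin (n + 1) → ℝ) :
    rkOf ℓ v + Module.finrank ℝ (commonKer (coneForms ℓ) (flatOf ℓ v)) = n + 1 := by
  have hhom : Submodule.span ℝ (ℓ '' flatOf ℓ v) ≤ homogeneousSubmodule _ _ 1 :=
    Submodule.span_le.mpr (Set.image_subset_iff.mpr fun i _ => hP.hhom i)
  have hrk : rkOf ℓ v = Module.finrank ℝ (Submodule.span ℝ (coneForms ℓ '' flatOf ℓ v)) := by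
    have himage : coneForms ℓ '' flatOf ℓ v = linearForm '' (ℓ '' flatOf ℓ v) := by
      rw [Set.image_image]
      rfl
    rw [rkOf, himage, ← Submodule.map_span, ← LinearMap.range_domRestrict]
    exact (LinearMap.finrank_range_of_inj fun p q hpq =>
      Subtype.ext (linearForm_injOn (hhom p.2) (hhom q.2) hpq)).symm
  rw [hrk, finrank_span_image_add_finrank_commonKer, Module.finrank_fin_fun]

theorem isFace_flatOf (hP : IsPolytopeSetup ℓ) {v : Fin (n + 1) → ℝ}
    (hne : (faceOf ℓ v).Nonempty)
    (hdim : n ≤ Module.finrank ℝ (affineSpan ℝ (faceOf ℓ v)).direction + rkOf ℓ v) :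
    IsFace (coneForms ℓ) (flatOf ℓ v) := by
  let L := commonKer (coneForms ℓ) (flatOf ℓ v)
  have hmem (y) (hy : y ∈ faceOf ℓ v) : lift1 y ∈ L :=
    mem_commonKer.mpr fun i hi => (hP.coneForms_apply i _).trans (hy.2 i hi)
  refine isFace_of_mem_iff_forall_eq_zero (B := lift1 '' faceOf ℓ v)
    (hP.nonneg_of_mem_lift1_image fun y hy => hy.1) fun i => ?_
  rw [Set.forall_mem_image]
  refine ⟨fun hi y hy => mem_commonKer.mp (hmem y hy) i hi, fun h0 => ?_⟩
  have hlift := finrank_direction_add_one_le hne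
    (M := L ⊓ LinearMap.ker (coneForms ℓ i)) fun y hy => ⟨hmem y hy, h0 hy⟩
  have hrk : rkOf ℓ v + Module.finrank ℝ L = n + 1 := hP.rkOf_add_finrank_commonKer v
  have hle : L ≤ LinearMap.ker (coneForms ℓ i) :=
    inf_eq_left.mp (Submodule.eq_of_le_of_finrank_le inf_le_left (by omega))
  rw [← hP.activeSet_coneForms, mem_activeSet]
  exact hle (hP.mem_commonKer_flatOf v)

theorem adjointOrder_le_ordOf (hP : IsPolytopeSetup ℓ) (v : Fin (n + 1) → ℝ) :
    adjointOrder (coneForms ℓ) v ≤ ordOf ℓ v := by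
  have hrk := hP.rkOf_add_finrank_commonKer v
  have hface (h : (faceOf ℓ v).Nonempty ∧
      Module.finrank ℝ (affineSpan ℝ (faceOf ℓ v)).direction = n - rkOf ℓ v) :
      IsFace (coneForms ℓ) (flatOf ℓ v) := hP.isFace_flatOf h.1 (by omega)
  rw [adjointOrder, hP.activeSet_coneForms, Module.finrank_fin_fun, ordOf, nlOf]
  by_cases hdim : (faceOf ℓ v).Nonempty ∧
      Module.finrank ℝ (affineSpan ℝ (faceOf ℓ v)).direction = n - rkOf ℓ v
  · rw [if_pos hdim, if_pos (hface hdim)]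
    omega
  · rw [if_neg hdim]
    split_ifs <;> omega

theorem isAdjoint (hP : IsPolytopeSetup ℓ) {f : MvPolynomial (Fin (n + 1)) ℂ}
    (hf : f.totalDegree ≤ d - n - 1)
    (hfvan : ∀ v : Fin (n + 1) → ℝ, v ≠ 0 → f ∈ pointIdealC v ^ ordOf ℓ v) :
    IsAdjoint (coneForms ℓ) (evalScalars ℝ f) where
  isPolyFun := by
    have hd := hP.hd
    rw [Fintype.card_fin, Module.finrank_fin_fun]
    exact (isPolyFun_evalScalars hf).mono (by omega)
  vanishesToOrder v hv :=
    (vanishesToOrder_evalScalars (fun _ => evalScalars_eq_zero_of_mem_pointIdealC)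
      (hfvan v hv)).mono (hP.adjointOrder_le_ordOf v)

end IsPolytopeSetup

end Polytopes

theorem adjoint_uniqueness_general {n d : ℕ}
    (ℓ : Fin d → MvPolynomial (Fin (n + 1)) ℝ) (hP : IsPolytopeSetup ℓ)
    (f g : MvPolynomial (Fin (n + 1)) ℂ)
    (hf : f.totalDegree ≤ d - n - 1) (hg : g.totalDegree ≤ d - n - 1)
    (hfvan : ∀ v : Fin (n + 1) → ℝ, v ≠ 0 → f ∈ pointIdealC v ^ ordOf ℓ v)
    (hgvan : ∀ v : Fin (n + 1) → ℝ, v ≠ 0 → g ∈ pointIdealC v ^ ordOf ℓ v) :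
    ∃ a b : ℂ, (a, b) ≠ (0, 0) ∧ a • f + b • g = 0 := by
  obtain ⟨a, b, hab, hfg⟩ := (hP.isAdjoint hf hfvan).exists_const_mul_add_const_mul_eq_zero
    hP.isFacetSystem (hP.isAdjoint hg hgvan)
  refine ⟨a, b, hab, eq_zero_of_forall_evalScalars_eq_zero (K := ℝ) fun x => ?_⟩
  rw [← hfg x]
  simp [evalScalars]

/-- **uniqueness.** Two homogeneous polynomials of degree `d − n − 1` both
satisfying the vanishing conditions `f ∈ I_v^{ord_P(L_v)}` for all nonzero `v ∈ ℝ^{n+1}` are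
linearly dependent over `ℂ`. -/
theorem adjoint_uniqueness {n d : ℕ}
    (ℓ : Fin d → MvPolynomial (Fin (n + 1)) ℝ) (hP : IsPolytopeSetup ℓ)
    (f g : MvPolynomial (Fin (n + 1)) ℂ)
    (hf : f.IsHomogeneous (d - n - 1)) (hg : g.IsHomogeneous (d - n - 1))
    (hfvan : ∀ v : Fin (n + 1) → ℝ, v ≠ 0 → f ∈ pointIdealC v ^ ordOf ℓ v)
    (hgvan : ∀ v : Fin (n + 1) → ℝ, v ≠ 0 → g ∈ pointIdealC v ^ ordOf ℓ v) :
    ∃ a b : ℂ, (a, b) ≠ (0, 0) ∧ a • f + b • g = 0 :=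
  adjoint_uniqueness_general ℓ hP f g hf.totalDegree_le hg.totalDegree_le hfvan hgvan

end
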